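/- Let p be a prime and G a group with an N_p-series G = G₁ ≥ G₂ ≥ …, i.e., [G_i, G_j] ≤ G_{i+j} and G_i^p ≤ G_{pi} for all i,j. Then the associated graded abelian group L*(G) = ⊕_i G_i/G_{i+1}, with bracket induced by commutation on homogeneous components and extended bilinearly, is a Lie algebra over 𝔽_p. -/

import Mathlib

/-!
For an `N_p`-series, `c x y = x⁻¹y⁻¹xy` maps `G_i × G_j` to `G_{i+j}`, and the identities
`c (x x') y = (c x y)^{x'} · c x' y` and `c x (y y') = c x y' · (c x y)^{y'}`, together with the fact
that conjugation acts trivially on `G_n/G_{n+1}`, make it a well-defined biadditive pairing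
`G_i/G_{i+1} × G_j/G_{j+1} → G_{i+j}/G_{i+j+1}`. Extended to the direct sum it is alternating because
`c x x = 1` and `c y x = (c x y)⁻¹`, and the Jacobi identity is the Hall–Witt identity read modulo
`G_{i+j+k+1}`. Since `x ^ p ∈ G_{pi} ≤ G_{i+1}` for `x ∈ G_i`, the direct sum is an
`𝔽_p`-vector space, and biadditivity gives `𝔽_p`-bilinearity.

The grading is indexed by all of `ℕ`: the hypotheses force `G_0 = G_1 = G`, so the component of
degree `0` vanishes and the commutator and power conditions needed hold in degree `0` as well.
-/

namespace NpGraded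

open DirectSum

variable {p : ℕ} {G : Type u} [Group G]

/-! ### The filtration and its quotients -/

/-- The group commutator `x⁻¹y⁻¹xy`; Mathlib's `⁅x, y⁆` is `xyx⁻¹y⁻¹` instead. -/
def c (x y : G) : G := x⁻¹ * y⁻¹ * x * y

/-- A descending central filtration indexed by `ℕ`, with elementary abelian `p`-quotients and
`[F i, F j] ≤ F (i + j)`. Only `x ^ p ∈ F (i + 1)` is recorded of the power condition. -/
structure Series (p : ℕ) (G : Type u) [Group G] where
  F : ℕ → Subgroup G
  one : F 1 = ⊤
  anti : ∀ i, F (i + 1) ≤ F i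
  comm : ∀ i j, ∀ x ∈ F i, ∀ y ∈ F j, c x y ∈ F (i + j)
  pow : ∀ i, ∀ x ∈ F i, x ^ p ∈ F (i + 1)

variable (S : Series p G)

lemma comm_one (i : ℕ) {x : G} (hx : x ∈ S.F i) (g : G) : c x g ∈ S.F (i + 1) :=
  S.comm i 1 x hx g (by simp [S.one])

lemma conj_mem (i : ℕ) {x : G} (hx : x ∈ S.F i) (g : G) : g⁻¹ * x * g ∈ S.F i := by
  have h := mul_mem hx (S.anti i (comm_one S i hx g))
  simpa [c, mul_assoc] using h

/-- `F (i + 1)` as a subgroup of `F i`. -/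
abbrev N (i : ℕ) : Subgroup (S.F i) := (S.F (i + 1)).subgroupOf (S.F i)

instance (i : ℕ) : (N S i).Normal where
  conj_mem := by
    intro x hx g
    rw [Subgroup.mem_subgroupOf] at hx ⊢
    simpa using conj_mem S (i + 1) hx (g : G)⁻¹

/-- The homogeneous component `F i / F (i + 1)`, written additively. -/
abbrev A (i : ℕ) : Type u := Additive (S.F i ⧸ N S i)

instance (i : ℕ) : AddCommGroup (A S i) :=
  { (inferInstance : AddGroup (A S i)) with
    add_comm := by
      intro a b
      obtain ⟨x, rfl⟩ := QuotientGroup.mk_surjective a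
      obtain ⟨y, rfl⟩ := QuotientGroup.mk_surjective b
      refine (QuotientGroup.eq (s := N S i) (a := x * y) (b := y * x)).2 ?_
      rw [Subgroup.mem_subgroupOf]
      have h := comm_one S i y.2 (x : G)
      simpa [c, mul_assoc] using h }

instance (i : ℕ) : Module (ZMod p) (A S i) :=
  AddCommGroup.zmodModule (by
    intro a
    obtain ⟨x, rfl⟩ := QuotientGroup.mk_surjective a
    refine (QuotientGroup.eq_one_iff (N := N S i) (x ^ p)).2 ?_
    rw [Subgroup.mem_subgroupOf]
    exact S.pow i x x.2)

/-- The associated graded space `⊕ F i / F (i + 1)`. -/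
abbrev L : Type u := ⨁ i, A S i

/-! ### Homogeneous classes -/

/-- The class of an element of `F i` in degree `i`. -/
def cls (i : ℕ) (x : S.F i) : A S i := Additive.ofMul (QuotientGroup.mk x)

lemma cls_surj (i : ℕ) (a : A S i) : ∃ x, cls S i x = a := QuotientGroup.mk_surjective a

lemma cls_mul (i : ℕ) (x y : S.F i) : cls S i (x * y) = cls S i x + cls S i y := rfl

lemma cls_eq_iff (i : ℕ) (x y : S.F i) :
    cls S i x = cls S i y ↔ (x : G)⁻¹ * y ∈ S.F (i + 1) :=
  (QuotientGroup.eq (s := N S i) (a := x) (b := y)).trans (by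
    rw [Subgroup.mem_subgroupOf]; rfl)

/-- The class of `g` in degree `i` of the graded space, with junk value `0` if `g ∉ F i`. Taking a
bare element of `G` makes classes in propositionally equal degrees comparable. -/
noncomputable def τ (i : ℕ) (g : G) : L S :=
  open Classical in if h : g ∈ S.F i then DirectSum.of (A S) i (cls S i ⟨g, h⟩) else 0

lemma τ_of {i : ℕ} {g : G} (h : g ∈ S.F i) :
    τ S i g = DirectSum.of (A S) i (cls S i ⟨g, h⟩) := dif_pos h

lemma of_cls (i : ℕ) (x : S.F i) : DirectSum.of (A S) i (cls S i x) = τ S i x :=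
  (τ_of S x.2).symm

lemma τ_mul {i : ℕ} {x y : G} (hx : x ∈ S.F i) (hy : y ∈ S.F i) :
    τ S i (x * y) = τ S i x + τ S i y := by
  rw [τ_of S hx, τ_of S hy, τ_of S (mul_mem hx hy), ← map_add, ← cls_mul]; rfl

lemma τ_eq_iff {i : ℕ} {x y : G} (hx : x ∈ S.F i) (hy : y ∈ S.F i) :
    τ S i x = τ S i y ↔ x⁻¹ * y ∈ S.F (i + 1) := by
  rw [τ_of S hx, τ_of S hy, (DirectSum.of_injective i).eq_iff, cls_eq_iff]

lemma τ_one (i : ℕ) : τ S i 1 = 0 := by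
  have h := τ_mul S (one_mem (S.F i)) (one_mem (S.F i))
  simpa using h

lemma τ_zero {i : ℕ} {x : G} (hx : x ∈ S.F (i + 1)) : τ S i x = 0 := by
  rw [← τ_one S i, eq_comm, τ_eq_iff S (one_mem _) (S.anti i hx)]
  simpa using hx

lemma τ_inv {i : ℕ} {x : G} (hx : x ∈ S.F i) : τ S i x⁻¹ = - τ S i x := by
  rw [eq_neg_iff_add_eq_zero, ← τ_mul S (inv_mem hx) hx, inv_mul_cancel, τ_one]

lemma τ_conj {i : ℕ} {x : G} (hx : x ∈ S.F i) (g : G) : τ S i (g⁻¹ * x * g) = τ S i x := by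
  rw [eq_comm, τ_eq_iff S hx (conj_mem S i hx g)]
  simpa [c, mul_assoc] using comm_one S i hx g

/-! ### The commutator pairing -/

lemma τ_c_mul_right {i j : ℕ} {x y z : G} (hx : x ∈ S.F i) (hy : y ∈ S.F j) (hz : z ∈ S.F j) :
    τ S (i + j) (c x (y * z)) = τ S (i + j) (c x y) + τ S (i + j) (c x z) := by
  have e : c x (y * z) = c x z * (z⁻¹ * c x y * z) := by simp only [c]; group
  have hxy := S.comm i j x hx y hy
  rw [e, τ_mul S (S.comm i j x hx z hz) (conj_mem S _ hxy z), τ_conj S hxy, add_comm]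

lemma τ_c_mul_left {i j : ℕ} {x y z : G} (hx : x ∈ S.F i) (hy : y ∈ S.F i) (hz : z ∈ S.F j) :
    τ S (i + j) (c (x * y) z) = τ S (i + j) (c x z) + τ S (i + j) (c y z) := by
  have e : c (x * y) z = (y⁻¹ * c x z * y) * c y z := by simp only [c]; group
  have hxz := S.comm i j x hx z hz
  rw [e, τ_mul S (conj_mem S _ hxz y) (S.comm i j y hy z hz), τ_conj S hxz]

/-- Commutation with a fixed `x ∈ F i`, as a map out of degree `j`. -/
noncomputable def β₁ (i j : ℕ) (x : S.F i) : A S j →+ L S :=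
  MonoidHom.toAdditiveLeft (QuotientGroup.lift (N S j)
    (MonoidHom.mk' (fun y : S.F j => Multiplicative.ofAdd (τ S (i + j) (c (x : G) y)))
      (fun y z => congrArg Multiplicative.ofAdd (τ_c_mul_right S x.2 y.2 z.2)))
    (by
      intro y hy
      rw [Subgroup.mem_subgroupOf] at hy
      exact congrArg Multiplicative.ofAdd (τ_zero S (S.comm i (j + 1) x x.2 y hy))))

lemma β₁_cls (i j : ℕ) (x : S.F i) (y : S.F j) :
    β₁ S i j x (cls S j y) = τ S (i + j) (c (x : G) y) := rfl

/-- The commutator pairing of the homogeneous components of degrees `i` and `j`. -/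
noncomputable def β (i j : ℕ) : A S i →+ A S j →+ L S :=
  MonoidHom.toAdditiveLeft (QuotientGroup.lift (N S i)
    (MonoidHom.mk' (fun x : S.F i => Multiplicative.ofAdd (β₁ S i j x)) (by
      intro x y
      refine congrArg Multiplicative.ofAdd (?_ : _ = β₁ S i j x + β₁ S i j y)
      refine AddMonoidHom.ext fun a => ?_
      obtain ⟨z, rfl⟩ := cls_surj S j a
      simp only [AddMonoidHom.add_apply, β₁_cls]
      exact τ_c_mul_left S x.2 y.2 z.2))
    (by
      intro x hx
      rw [Subgroup.mem_subgroupOf] at hx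
      refine congrArg Multiplicative.ofAdd (?_ : β₁ S i j x = 0)
      refine AddMonoidHom.ext fun a => ?_
      obtain ⟨z, rfl⟩ := cls_surj S j a
      rw [β₁_cls]
      have h := S.comm (i + 1) j x hx z z.2
      rw [add_right_comm] at h
      exact τ_zero S h))

lemma β_cls (i j : ℕ) (x : S.F i) (y : S.F j) :
    β S i j (cls S i x) (cls S j y) = τ S (i + j) (c (x : G) y) := rfl

/-- The biadditive extension of the commutator pairing to the whole graded space. -/
noncomputable def B : L S →+ L S →+ L S :=
  DirectSum.toAddMonoid fun i =>
    (DirectSum.toAddMonoid fun j => (β S i j).flip).flip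

lemma B_τ {i j : ℕ} {x y : G} (hx : x ∈ S.F i) (hy : y ∈ S.F j) :
    B S (τ S i x) (τ S j y) = τ S (i + j) (c x y) := by
  rw [τ_of S hx, τ_of S hy]
  simp only [B, DirectSum.toAddMonoid_of, AddMonoidHom.flip_apply]
  exact β_cls S i j ⟨x, hx⟩ ⟨y, hy⟩

/-! ### Alternativity and the Jacobi identity -/

lemma L_induction {P : L S → Prop} (h : ∀ i, ∀ x ∈ S.F i, P (τ S i x))
    (hadd : ∀ a b, P a → P b → P (a + b)) (a : L S) : P a := by
  induction a using DirectSum.induction_on with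
  | zero => rw [← τ_one S 0]; exact h 0 1 (one_mem _)
  | of i a =>
    obtain ⟨x, rfl⟩ := cls_surj S i a
    rw [of_cls]; exact h i x x.2
  | add a b ha hb => exact hadd a b ha hb

lemma B_skew (a b : L S) : B S a b = - B S b a := by
  induction a using L_induction S with
  | hadd a a' h h' => simp only [map_add, AddMonoidHom.add_apply, h, h', neg_add]
  | h i x hx =>
    induction b using L_induction S with
    | hadd b b' h h' => simp only [map_add, AddMonoidHom.add_apply, h, h', neg_add]
    | h j y hy =>
      rw [B_τ S hx hy, B_τ S hy hx, add_comm j i,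
        ← τ_inv S (add_comm j i ▸ S.comm j i y hy x hx)]
      congr 1
      simp only [c]; group

lemma B_self (a : L S) : B S a a = 0 := by
  induction a using L_induction S with
  | hadd a b h h' =>
    simp only [map_add, AddMonoidHom.add_apply, h, h', B_skew S a b]
    abel
  | h i x hx =>
    rw [B_τ S hx hx]
    simp [c, τ_one]

/-- The Hall–Witt identity, in terms of `c`. -/
lemma hall_witt (x y z : G) :
    (y⁻¹ * c (c x y⁻¹) z * y) * (z⁻¹ * c (c y z⁻¹) x * z) * (x⁻¹ * c (c z x⁻¹) y * x) = 1 := by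
  simp only [c]; group

/-- The class of one factor of the Hall–Witt identity: conjugation is invisible in the graded
space, and the inverse inside the commutator contributes the sign. -/
lemma τ_hall_witt_term {i j k : ℕ} {x y z : G} (hx : x ∈ S.F i) (hy : y ∈ S.F j)
    (hz : z ∈ S.F k) :
    τ S (i + j + k) (y⁻¹ * c (c x y⁻¹) z * y) = - B S (B S (τ S i x) (τ S j y)) (τ S k z) := by
  have h1 := S.comm i j x hx _ (inv_mem hy)
  rw [τ_conj S (S.comm _ k _ h1 z hz), ← B_τ S h1 hz, ← B_τ S hx (inv_mem hy), τ_inv S hy]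
  simp

lemma B_jacobi (a b d : L S) : B S (B S a b) d + B S (B S b d) a + B S (B S d a) b = 0 := by
  induction a using L_induction S with
  | hadd a a' h h' =>
    simp only [map_add, AddMonoidHom.add_apply]
    rw [← add_zero (0 : L S)]
    nth_rw 1 [← h]
    rw [← h']
    abel
  | h i x hx =>
  induction b using L_induction S with
  | hadd a a' h h' =>
    simp only [map_add, AddMonoidHom.add_apply]
    rw [← add_zero (0 : L S)]
    nth_rw 1 [← h]
    rw [← h']
    abel
  | h j y hy =>
  induction d using L_induction S with
  | hadd a a' h h' =>
    simp only [map_add, AddMonoidHom.add_apply]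
    rw [← add_zero (0 : L S)]
    nth_rw 1 [← h]
    rw [← h']
    abel
  | h k z hz =>
    have e2 : j + k + i = i + j + k := by omega
    have e3 : k + i + j = i + j + k := by omega
    have m1 := conj_mem S _ (S.comm _ k _ (S.comm i j x hx _ (inv_mem hy)) z hz) y
    have m2 := conj_mem S _ (S.comm _ i _ (S.comm j k y hy _ (inv_mem hz)) x hx) z
    have m3 := conj_mem S _ (S.comm _ j _ (S.comm k i z hz _ (inv_mem hx)) y hy) x
    have t1 := τ_hall_witt_term S hx hy hz
    have t2 := τ_hall_witt_term S hy hz hx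
    have t3 := τ_hall_witt_term S hz hx hy
    rw [e2] at m2 t2
    rw [e3] at m3 t3
    have h := congrArg (τ S (i + j + k)) (hall_witt x y z)
    rw [τ_mul S (mul_mem m1 m2) m3, τ_mul S m1 m2, t1, t2, t3, τ_one] at h
    rw [← neg_eq_zero, ← h]
    abel

/-! ### The Lie algebra and its grading -/

/-- The graded space as a Lie ring, with the bracket induced by commutation. -/
noncomputable abbrev lieRing : LieRing (L S) where
  bracket a b := B S a b
  add_lie a b d := by simp only [map_add, AddMonoidHom.add_apply]
  lie_add a b d := map_add _ _ _
  lie_self a := B_self S a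
  leibniz_lie a b d := by
    have h := B_jacobi S a b d
    change B S a (B S b d) = B S (B S a b) d + B S b (B S a d)
    rw [B_skew S a (B S b d), B_skew S b (B S a d), B_skew S a d, map_neg,
      AddMonoidHom.neg_apply, neg_neg, neg_eq_iff_add_eq_zero, ← h]
    abel

/-- The graded space as a Lie algebra over `𝔽_p`. -/
noncomputable abbrev lieAlgebra : @LieAlgebra (ZMod p) (L S) _ (lieRing S) :=
  letI := lieRing S
  { (inferInstance : Module (ZMod p) (⨁ i, A S i)) with
    lie_smul := fun t a b => ZMod.map_smul (B S a) t b }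

lemma span_range_le (i : ℕ) :
    Submodule.span (ZMod p) (Set.range fun x : S.F i => τ S i x) ≤
      LinearMap.range (DirectSum.lof (ZMod p) ℕ (A S) i) := by
  rw [Submodule.span_le]
  rintro _ ⟨x, rfl⟩
  exact ⟨cls S i x, of_cls S i x⟩

lemma indep : iSupIndep fun i : {i : ℕ // 1 ≤ i} =>
    Submodule.span (ZMod p) (Set.range fun x : S.F i => τ S i x) := by
  have h : iSupIndep fun i : ℕ => LinearMap.range (DirectSum.lof (ZMod p) ℕ (A S) i) := by
    intro i
    -- the other components lie in the kernel of the projection to degree `i`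
    have hker : (⨆ (j) (_ : j ≠ i), LinearMap.range (DirectSum.lof (ZMod p) ℕ (A S) j)) ≤
        LinearMap.ker (DirectSum.component (ZMod p) ℕ (A S) i) := by
      refine iSup₂_le fun j hj => ?_
      rintro _ ⟨a, rfl⟩
      exact DirectSum.of_eq_of_ne j i a hj.symm
    rw [Submodule.disjoint_def]
    rintro _ ⟨a, rfl⟩ hx
    have h := hker hx
    rw [LinearMap.mem_ker, DirectSum.component.lof_self] at h
    rw [h, map_zero]
  exact (h.mono (span_range_le S)).comp Subtype.val_injective

lemma spanning : (⨆ i : {i : ℕ // 1 ≤ i},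
    Submodule.span (ZMod p) (Set.range fun x : S.F i => τ S i x)) = ⊤ := by
  rw [eq_top_iff]
  rintro a -
  induction a using L_induction S with
  | hadd a b h h' => exact add_mem h h'
  | h i x hx =>
    rcases Nat.eq_zero_or_pos i with rfl | hi
    · -- the component of degree `0` is trivial because `F 1 = ⊤`
      rw [τ_zero S (by simp [S.one])]
      exact zero_mem _
    · exact Submodule.mem_iSup_of_mem ⟨i, hi⟩ (Submodule.subset_span ⟨⟨x, hx⟩, rfl⟩)

end NpGraded


/-- Given an `N_p`-series `G = G₁ ≥ G₂ ≥ …` of a group `G` (i.e.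
`[G_i,G_j] ≤ G_{i+j}` and `G_i^p ≤ G_{pi}`), the associated graded object
`⊕ G_i/G_{i+1}`, with bracket induced by the group commutator on homogeneous
components, is a Lie algebra over `𝔽_p`.  Formally: there is a Lie algebra `L` over
`ZMod p` together with maps `π i : G_i → L` which are additive modulo `G_{i+1}`,
identify `G_i/G_{i+1}` with the `i`-th homogeneous component, carry the group
commutator to the Lie bracket, and whose homogeneous components are independent and
span `L`. -/
theorem stmt_15 (p : ℕ) [Fact p.Prime] {G : Type u} [Group G]
    (Gs : ℕ → Subgroup G) (h1 : Gs 1 = ⊤)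
    (hdesc : ∀ i, Gs (i + 1) ≤ Gs i)
    (hcomm : ∀ i j, 1 ≤ i → 1 ≤ j → ∀ x ∈ Gs i, ∀ y ∈ Gs j, x⁻¹ * y⁻¹ * x * y ∈ Gs (i + j))
    (hpow : ∀ i, 1 ≤ i → ∀ x ∈ Gs i, x ^ p ∈ Gs (p * i)) :
    ∃ (L : Type u) (instL : LieRing L) (instA : LieAlgebra (ZMod p) L)
      (π : ∀ i : ℕ, (Gs i) → L),
      letI := instL
      letI := instA
      (∀ i, 1 ≤ i → ∀ x y : Gs i, π i (x * y) = π i x + π i y) ∧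
      (∀ i, 1 ≤ i → ∀ x y : Gs i, (π i x = π i y ↔ (x : G)⁻¹ * (y : G) ∈ Gs (i + 1))) ∧
      (∀ i j (hi : 1 ≤ i) (hj : 1 ≤ j) (x : Gs i) (y : Gs j),
        ⁅π i x, π j y⁆ =
          π (i + j) ⟨(x : G)⁻¹ * (y : G)⁻¹ * x * y, hcomm i j hi hj x x.2 y y.2⟩) ∧
      iSupIndep (fun i : {i : ℕ // 1 ≤ i} =>
        Submodule.span (ZMod p) (Set.range (π i))) ∧
      (⨆ i : {i : ℕ // 1 ≤ i}, Submodule.span (ZMod p) (Set.range (π i))) = ⊤ := by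
  have h0 : Gs 0 = ⊤ := top_le_iff.1 (h1 ▸ hdesc 0)
  have hanti : Antitone Gs := antitone_nat_of_succ_le hdesc
  -- `[G_n, G] ≤ G_n`, which is the commutator condition when one of the degrees is `0`
  have hc0 : ∀ n, 1 ≤ n → ∀ x ∈ Gs n, ∀ y : G, x⁻¹ * y⁻¹ * x * y ∈ Gs n := fun n hn x hx y =>
    hdesc n (hcomm n 1 hn le_rfl x hx y (by simp [h1]))
  let S : NpGraded.Series p G :=
    { F := Gs
      one := h1
      anti := hdesc
      comm := by
        intro i j x hx y hy
        change x⁻¹ * y⁻¹ * x * y ∈ _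
        rcases Nat.eq_zero_or_pos j with rfl | hj
        · rcases Nat.eq_zero_or_pos i with rfl | hi
          · simp [h0]
          · exact hc0 i hi x hx y
        · rcases Nat.eq_zero_or_pos i with rfl | hi
          · rw [zero_add]
            simpa [mul_assoc] using inv_mem (hc0 j hj y hy x)
          · exact hcomm i j hi hj x hx y hy
      pow := by
        intro i x hx
        rcases Nat.eq_zero_or_pos i with rfl | hi
        · simp [h1]
        · have hp := (Fact.out : p.Prime).two_le
          exact hanti (by nlinarith) (hpow i hi x hx) }
  refine ⟨NpGraded.L S, NpGraded.lieRing S, NpGraded.lieAlgebra S,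
    fun i x => NpGraded.τ S i x, ?_, ?_, ?_, ?_, ?_⟩
  · exact fun i _ x y => NpGraded.τ_mul S x.2 y.2
  · exact fun i _ x y => NpGraded.τ_eq_iff S x.2 y.2
  · exact fun i j _ _ x y => NpGraded.B_τ S x.2 y.2
  · exact NpGraded.indep S
  · exact NpGraded.spanning S
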